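/- Let R be a ring, N a right R-module, Ω a nonempty set, and M = ⨁_{i ∈ Ω} N the direct sum of copies of N indexed by Ω. Then End_R(M) is a commutator ring if and only if either Ω is infinite or End_R(N) is a commutator ring. -/

import Mathlib

/-- `a` is a (finite) sum of additive commutators `x*y - y*x` of elements of the ring. -/
def IsSumOfCommutators {A : Type*} [Ring A] (a : A) : Prop :=
  ∃ (n : ℕ) (x y : Fin n → A), a = ∑ i, (x i * y i - y i * x i)

theorem isc_zero {A : Type*} [Ring A] : IsSumOfCommutators (0 : A) :=
  ⟨0, fun _ => 0, fun _ => 0, by simp⟩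

theorem isc_comm {A : Type*} [Ring A] (x y : A) : IsSumOfCommutators (x * y - y * x) :=
  ⟨1, fun _ => x, fun _ => y, by simp⟩

theorem isc_add {A : Type*} [Ring A] {a b : A} (ha : IsSumOfCommutators a)
    (hb : IsSumOfCommutators b) : IsSumOfCommutators (a + b) := by
  obtain ⟨n, x, y, rfl⟩ := ha
  obtain ⟨m, z, w, rfl⟩ := hb
  exact ⟨n + m, Fin.append x z, Fin.append y w, by simp [Fin.sum_univ_add]; abel⟩

theorem isc_sum {A : Type*} [Ring A] {ι : Type*} (s : Finset ι) (f : ι → A)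
    (h : ∀ i ∈ s, IsSumOfCommutators (f i)) : IsSumOfCommutators (∑ i ∈ s, f i) :=
  Finset.sum_induction f _ (fun _ _ => isc_add) isc_zero h

section
variable {S : Type*} [Ring S] {N : Type*} [AddCommGroup N] [Module S N] {Ω : Type*}

theorem isc_infinite [DecidableEq Ω] (e : Ω ≃ ℕ × Ω)
    (φ : Module.End S (DirectSum Ω fun _ : Ω => N)) : IsSumOfCommutators φ := by
  let sh : Module.End S (DirectSum Ω fun _ : Ω => N) :=
    DirectSum.toModule S Ω _ fun i => DirectSum.lof S Ω (fun _ => N) (e.symm ((e i).1 + 1, (e i).2))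
  let tf : ℕ → Ω → (N →ₗ[S] (DirectSum Ω fun _ : Ω => N)) := fun k w =>
    Nat.casesOn k 0 fun k => DirectSum.lof S Ω (fun _ => N) (e.symm (k, w))
  let t : Module.End S (DirectSum Ω fun _ : Ω => N) :=
    DirectSum.toModule S Ω _ fun i => tf (e i).1 (e i).2
  let yf : ℕ → Ω → (N →ₗ[S] (DirectSum Ω fun _ : Ω => N)) := fun k w =>
    Nat.rec (sh ∘ₗ φ ∘ₗ DirectSum.lof S Ω (fun _ => N) (e.symm (0, w)))
      (fun k r => sh ∘ₗ (φ ∘ₗ DirectSum.lof S Ω (fun _ => N) (e.symm (k + 1, w)) + r)) k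
  let y : Module.End S (DirectSum Ω fun _ : Ω => N) :=
    DirectSum.toModule S Ω _ fun i => yf (e i).1 (e i).2
  have hts : ∀ m, t (sh m) = m := by
    intro m
    have : t ∘ₗ sh = LinearMap.id := by
      apply DirectSum.linearMap_ext
      intro i
      refine LinearMap.ext fun n => ?_
      simp [t, sh, tf, DirectSum.toModule_lof]
    exact LinearMap.congr_fun this m
  have key : φ = t * y - y * t := by
    apply DirectSum.linearMap_ext
    intro i
    refine LinearMap.ext fun n => ?_
    obtain ⟨⟨k, w⟩, rfl⟩ := e.symm.surjective i
    cases k with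
    | zero =>
      have h1 : y (DirectSum.lof S Ω (fun _ => N) (e.symm (0, w)) n)
          = sh (φ (DirectSum.lof S Ω (fun _ => N) (e.symm (0, w)) n)) := by
        simp [y, yf, DirectSum.toModule_lof]
      have h2 : t (DirectSum.lof S Ω (fun _ => N) (e.symm (0, w)) n) = 0 := by
        simp [t, tf, DirectSum.toModule_lof]
      simp [h1, h2, hts]
    | succ k =>
      have h1 : y (DirectSum.lof S Ω (fun _ => N) (e.symm (k + 1, w)) n)
          = sh (φ (DirectSum.lof S Ω (fun _ => N) (e.symm (k + 1, w)) n)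
            + y (DirectSum.lof S Ω (fun _ => N) (e.symm (k, w)) n)) := by
        simp [y, yf, DirectSum.toModule_lof]
      have h2 : t (DirectSum.lof S Ω (fun _ => N) (e.symm (k + 1, w)) n)
          = DirectSum.lof S Ω (fun _ => N) (e.symm (k, w)) n := by
        simp [t, tf, DirectSum.toModule_lof]
      simp only [LinearMap.comp_apply, LinearMap.sub_apply, Module.End.mul_apply, h1, h2, hts]
      abel
  rw [key]
  exact isc_comm _ _

theorem proj_incl [DecidableEq Ω] (i j : Ω) (n : N) :
    DirectSum.component S Ω (fun _ => N) i (DirectSum.lof S Ω (fun _ => N) j n)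
      = if i = j then n else 0 := by
  split_ifs with h
  · subst h; exact DirectSum.component.lof_self (M := fun _ : Ω => N) S i n
  · rw [DirectSum.component.of, dif_neg (fun h' => h h'.symm)]

theorem sum_incl_proj [DecidableEq Ω] [Fintype Ω] (m : DirectSum Ω fun _ : Ω => N) :
    ∑ i, DirectSum.lof S Ω (fun _ => N) i (DirectSum.component S Ω (fun _ => N) i m) = m := by
  apply DirectSum.ext_component S
  intro j
  rw [map_sum]
  simp [proj_incl]

theorem isc_forward [DecidableEq Ω] [Fintype Ω] (i₀ : Ω)
    (h : ∀ φ : Module.End S (DirectSum Ω fun _ : Ω => N), IsSumOfCommutators φ)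
    (a : Module.End S N) : IsSumOfCommutators a := by
  let inc := DirectSum.lof S Ω (fun _ => N)
  let pr := DirectSum.component S Ω (fun _ => N)
  obtain ⟨n, x, y, hxy⟩ := h (inc i₀ ∘ₗ a ∘ₗ pr i₀)
  let c : Module.End S (DirectSum Ω fun _ : Ω => N) → Ω → Ω → Module.End S N :=
    fun f i j => pr i ∘ₗ f ∘ₗ inc j
  have hmul : ∀ f g i j, c (f * g) i j = ∑ k, c f i k * c g k j := by
    intro f g i j
    refine LinearMap.ext fun m => ?_
    simp only [c, LinearMap.comp_apply, Module.End.mul_apply, LinearMap.sum_apply]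
    conv_lhs => rw [← sum_incl_proj (S := S) (g (inc j m))]
    simp only [map_sum, inc, pr]
  have htr : a = ∑ i, c (inc i₀ ∘ₗ a ∘ₗ pr i₀) i i := by
    refine LinearMap.ext fun m => ?_
    simp [c, inc, pr, LinearMap.sum_apply, proj_incl]
  have hlin : ∀ i, c (∑ l, (x l * y l - y l * x l)) i i
      = ∑ l, (c (x l * y l) i i - c (y l * x l) i i) := by
    intro i
    refine LinearMap.ext fun m => ?_
    simp [c, LinearMap.sum_apply]
  rw [htr, hxy]
  simp only [hlin]
  rw [Finset.sum_comm]
  apply isc_sum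
  intro l _
  rw [Finset.sum_sub_distrib]
  simp only [hmul]
  rw [Finset.sum_comm (f := fun i k => c (y l) i k * c (x l) k i)]
  simp only [← Finset.sum_sub_distrib]
  exact isc_sum _ _ fun i _ => isc_sum _ _ fun k _ => isc_comm _ _

theorem isc_backward [DecidableEq Ω] [Fintype Ω]
    (h : ∀ φ : Module.End S N, IsSumOfCommutators φ)
    (φ : Module.End S (DirectSum Ω fun _ : Ω => N)) : IsSumOfCommutators φ := by
  let inc := DirectSum.lof S Ω (fun _ => N)
  let pr := DirectSum.component S Ω (fun _ => N)
  let E : Ω → Ω → Module.End S N → Module.End S (DirectSum Ω fun _ : Ω => N) :=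
    fun i j a => inc i ∘ₗ a ∘ₗ pr j
  have hφ : φ = ∑ i, ∑ j, E i j (pr i ∘ₗ φ ∘ₗ inc j) := by
    refine LinearMap.ext fun m => ?_
    conv_lhs => rw [← sum_incl_proj (S := S) (φ m)]
    simp only [LinearMap.sum_apply]
    apply Finset.sum_congr rfl
    intro i _
    conv_lhs => rw [← sum_incl_proj (S := S) m]
    simp [E, inc, pr]
  have hE : ∀ i j k l a b, E i j a * E k l b = if j = k then E i l (a * b) else 0 := by
    intro i j k l a b
    refine LinearMap.ext fun m => ?_
    by_cases hjk : j = k <;> simp [E, inc, pr, proj_incl, hjk]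
  rw [hφ]
  refine isc_sum _ _ fun i _ => isc_sum _ _ fun j _ => ?_
  generalize pr i ∘ₗ φ ∘ₗ inc j = a
  by_cases hij : i = j
  · subst hij
    obtain ⟨n, x, y, rfl⟩ := h a
    refine ⟨n, fun l => E i i (x l), fun l => E i i (y l), ?_⟩
    simp only [hE, if_true]
    refine LinearMap.ext fun m => ?_
    simp [E, LinearMap.sum_apply]
  · have : E i j a = E i j a * E j j 1 - E j j 1 * E i j a := by
      simp [hE, Ne.symm hij]
    rw [this]
    exact isc_comm _ _

end

theorem equiv_nat_prod (Ω : Type*) [Infinite Ω] : Nonempty (Ω ≃ ℕ × Ω) := by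
  rw [← Cardinal.lift_mk_eq']
  simp

/-- For a nonempty set `Ω` and a right `R`-module `N`, `End (⨁_{i ∈ Ω} N)` is a commutator
ring if and only if either `Ω` is infinite or `End N` is a commutator ring. -/
theorem stmt_8 {R : Type*} [Ring R] (N : Type*) [AddCommGroup N] [Module Rᵐᵒᵖ N]
    (Ω : Type*) [Nonempty Ω] :
    (∀ φ : Module.End Rᵐᵒᵖ (DirectSum Ω fun _ : Ω => N), IsSumOfCommutators φ) ↔
      (Infinite Ω ∨ ∀ φ : Module.End Rᵐᵒᵖ N, IsSumOfCommutators φ) := by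
  classical
  rcases finite_or_infinite Ω with hf | hi
  · have := Fintype.ofFinite Ω
    constructor
    · intro h
      exact Or.inr (isc_forward (Classical.arbitrary Ω) h)
    · rintro (h | h)
      · exact absurd hf (not_finite_iff_infinite.mpr h)
      · exact isc_backward h
  · obtain ⟨e⟩ := equiv_nat_prod Ω
    exact ⟨fun _ => Or.inl hi, fun _ => isc_infinite e⟩
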